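/- arXiv:1512.03687 — 2 statements merged into one kernel-verified Lean document; each statement's English description precedes it below -/
import Mathlib

section
/- Let A and B be nondegenerate SVNR-sets of dimension p on X = {x_1, …, x_n}, and let w_1, …, w_n be weights with w_j ≥ 0 and Σ_{j=1}^n w_j = 1. Then the weighted Jaccard similarity measure satisfies: (1) 0 ≤ W(A,B)_J ≤ 1; (2) W(A,B)_J = W(B,A)_J; (3) if t_A^i(x_j) = t_B^i(x_j), i_A^i(x_j) = i_B^i(x_j) and f_A^i(x_j) = f_B^i(x_j) for every j ∈ {1,…,n} and i ∈ {1,…,p}, then W(A,B)_J = 1. -/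
open Finset

noncomputable def weightedJaccardSVNR (n p : ℕ) (w : Fin n → ℝ)
    (tA iA fA tB iB fB : Fin p → Fin n → ℝ) : ℝ :=
  ∑ j : Fin n, w j * ((1 / (p : ℝ)) * ∑ i : Fin p,
    (tA i j * tB i j + iA i j * iB i j + fA i j * fB i j) /
      ((tA i j ^ 2 + iA i j ^ 2 + fA i j ^ 2) + (tB i j ^ 2 + iB i j ^ 2 + fB i j ^ 2)
        - (tA i j * tB i j + iA i j * iB i j + fA i j * fB i j)))

/-!
Regard each triple `(t, i, f)` as a vector of Euclidean 3-space. The Jaccard ratio of `x` and `y` is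
`⟪x, y⟫ / (‖x‖² + ‖y‖² - ⟪x, y⟫)`, and its denominator exceeds its numerator by `‖x - y‖²`. So the
ratio is at most `1`, and it lies in `[0, 1]` when `⟪x, y⟫ ≥ 0`. Averaging over the components and
taking a convex combination over the points both stay inside the interval `[0, 1]`.
-/

section InnerProductSpace

open scoped BigOperators RealInnerProductSpace

variable {E : Type*} [NormedAddCommGroup E] [InnerProductSpace ℝ E]

/-- The (Tanimoto form of the) Jaccard similarity of two vectors; `0` by convention at `(0, 0)`,
the only pair for which the denominator vanishes. -/
noncomputable def jaccard (x y : E) : ℝ :=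
  ⟪x, y⟫ / (‖x‖ ^ 2 + ‖y‖ ^ 2 - ⟪x, y⟫)

theorem jaccard_denom_sub_inner (x y : E) :
    ‖x‖ ^ 2 + ‖y‖ ^ 2 - ⟪x, y⟫ - ⟪x, y⟫ = ‖x - y‖ ^ 2 := by
  rw [norm_sub_sq_real]
  ring

theorem inner_le_jaccard_denom (x y : E) : ⟪x, y⟫ ≤ ‖x‖ ^ 2 + ‖y‖ ^ 2 - ⟪x, y⟫ :=
  sub_nonneg.mp <| (sq_nonneg _).trans_eq (jaccard_denom_sub_inner x y).symm

theorem jaccard_denom_nonneg (x y : E) : 0 ≤ ‖x‖ ^ 2 + ‖y‖ ^ 2 - ⟪x, y⟫ := by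
  linarith [inner_le_jaccard_denom x y, sq_nonneg ‖x‖, sq_nonneg ‖y‖]

theorem jaccard_nonneg {x y : E} (h : 0 ≤ ⟪x, y⟫) : 0 ≤ jaccard x y :=
  div_nonneg h (jaccard_denom_nonneg x y)

theorem jaccard_le_one (x y : E) : jaccard x y ≤ 1 :=
  div_le_one_of_le₀ (inner_le_jaccard_denom x y) (jaccard_denom_nonneg x y)

theorem jaccard_comm (x y : E) : jaccard x y = jaccard y x := by
  rw [jaccard, jaccard, real_inner_comm, add_comm]

theorem jaccard_self {x : E} (hx : x ≠ 0) : jaccard x x = 1 := by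
  rw [jaccard, real_inner_self_eq_norm_sq, add_sub_cancel_right,
    div_self (pow_ne_zero 2 (norm_ne_zero_iff.mpr hx))]

variable {ι κ : Type*} [Fintype ι] [Fintype κ]

/-- The weighted Jaccard similarity of two families of vectors: the similarity is averaged uniformly
over the components `i : ι` and then combined over the points `j : κ` with weights `w j`. -/
noncomputable def weightedJaccard (w : κ → ℝ) (a b : ι → κ → E) : ℝ :=
  ∑ j, w j * 𝔼 i, jaccard (a i j) (b i j)

theorem weightedJaccard_comm (w : κ → ℝ) (a b : ι → κ → E) :
    weightedJaccard w a b = weightedJaccard w b a := by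
  simp only [weightedJaccard, jaccard_comm]

variable [Nonempty ι] {w : κ → ℝ}

theorem weightedJaccard_mem_Icc (hw : ∀ j, 0 ≤ w j) (hw1 : ∑ j, w j = 1) {a b : ι → κ → E}
    (hab : ∀ i j, 0 ≤ ⟪a i j, b i j⟫) : weightedJaccard w a b ∈ Set.Icc (0 : ℝ) 1 :=
  (convex_Icc (0 : ℝ) 1).sum_mem (fun j _ => hw j) hw1 fun j _ =>
    ⟨expect_nonneg fun i _ => jaccard_nonneg (hab i j),
      expect_le univ_nonempty fun _ _ => jaccard_le_one _ _⟩

theorem weightedJaccard_self (hw1 : ∑ j, w j = 1) {a : ι → κ → E} (ha : ∀ i j, a i j ≠ 0) :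
    weightedJaccard w a a = 1 := by
  simp only [weightedJaccard, jaccard_self (ha _ _), Fintype.expect_const, mul_one, hw1]

theorem stmt_3_general (hw : ∀ j, 0 ≤ w j) (hw1 : ∑ j, w j = 1) {a b : ι → κ → E}
    (hab : ∀ i j, 0 ≤ ⟪a i j, b i j⟫) (hnd : ∀ i j, ¬(a i j = 0 ∧ b i j = 0)) :
    (0 ≤ weightedJaccard w a b ∧ weightedJaccard w a b ≤ 1) ∧
    weightedJaccard w a b = weightedJaccard w b a ∧
    ((∀ i j, a i j = b i j) → weightedJaccard w a b = 1) := by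
  refine ⟨weightedJaccard_mem_Icc hw hw1 hab, weightedJaccard_comm w a b, fun h => ?_⟩
  obtain rfl : a = b := funext₂ h
  exact weightedJaccard_self hw1 fun i j h0 => hnd i j ⟨h0, h0⟩

end InnerProductSpace

section Neutrosophic

open scoped RealInnerProductSpace

/-- A single valued neutrosophic triple of truth, indeterminacy and falsity degrees, as a vector of
Euclidean space. The degrees are arbitrary reals, not restricted to `[0, 1]`. -/
noncomputable def neutrosophicTriple (t i f : ℝ) : EuclideanSpace ℝ (Fin 3) :=
  !₂[t, i, f]

theorem inner_neutrosophicTriple (t i f t' i' f' : ℝ) :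
    ⟪neutrosophicTriple t i f, neutrosophicTriple t' i' f'⟫ = t * t' + i * i' + f * f' := by
  simp [neutrosophicTriple, PiLp.inner_apply, Fin.sum_univ_three, mul_comm]

theorem norm_neutrosophicTriple_sq (t i f : ℝ) :
    ‖neutrosophicTriple t i f‖ ^ 2 = t ^ 2 + i ^ 2 + f ^ 2 := by
  simp only [← real_inner_self_eq_norm_sq, inner_neutrosophicTriple, ← sq]

theorem neutrosophicTriple_inj {t i f t' i' f' : ℝ} :
    neutrosophicTriple t i f = neutrosophicTriple t' i' f' ↔ t = t' ∧ i = i' ∧ f = f' := by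
  simp [neutrosophicTriple]

theorem neutrosophicTriple_eq_zero {t i f : ℝ} :
    neutrosophicTriple t i f = 0 ↔ t = 0 ∧ i = 0 ∧ f = 0 := by
  simp [neutrosophicTriple]

theorem inner_neutrosophicTriple_nonneg {t i f t' i' f' : ℝ} (ht : 0 ≤ t) (hi : 0 ≤ i)
    (hf : 0 ≤ f) (ht' : 0 ≤ t') (hi' : 0 ≤ i') (hf' : 0 ≤ f') :
    0 ≤ ⟪neutrosophicTriple t i f, neutrosophicTriple t' i' f'⟫ := by
  rw [inner_neutrosophicTriple]
  positivity

theorem weightedJaccardSVNR_eq_weightedJaccard (n p : ℕ) (w : Fin n → ℝ)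
    (tA iA fA tB iB fB : Fin p → Fin n → ℝ) :
    weightedJaccardSVNR n p w tA iA fA tB iB fB =
      weightedJaccard w (fun i j => neutrosophicTriple (tA i j) (iA i j) (fA i j))
        (fun i j => neutrosophicTriple (tB i j) (iB i j) (fB i j)) := by
  simp only [weightedJaccardSVNR, weightedJaccard, jaccard, inner_neutrosophicTriple,
    norm_neutrosophicTriple_sq, Fintype.expect_eq_sum_div_card, Fintype.card_fin,
    one_div_mul_eq_div]

end Neutrosophic

theorem stmt_3
    (n p : ℕ) (hn : 1 ≤ n) (hp : 1 ≤ p)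
    (tA iA fA tB iB fB : Fin p → Fin n → ℝ)
    (htA : ∀ i j, tA i j ∈ Set.Icc (0 : ℝ) 1)
    (hiA : ∀ i j, iA i j ∈ Set.Icc (0 : ℝ) 1)
    (hfA : ∀ i j, fA i j ∈ Set.Icc (0 : ℝ) 1)
    (htB : ∀ i j, tB i j ∈ Set.Icc (0 : ℝ) 1)
    (hiB : ∀ i j, iB i j ∈ Set.Icc (0 : ℝ) 1)
    (hfB : ∀ i j, fB i j ∈ Set.Icc (0 : ℝ) 1)
    (hnd : ∀ i j, ¬((tA i j = 0 ∧ iA i j = 0 ∧ fA i j = 0) ∧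
                      (tB i j = 0 ∧ iB i j = 0 ∧ fB i j = 0)))
    (w : Fin n → ℝ) (hw : ∀ j, 0 ≤ w j) (hw1 : ∑ j, w j = 1) :
    (0 ≤ weightedJaccardSVNR n p w tA iA fA tB iB fB ∧ weightedJaccardSVNR n p w tA iA fA tB iB fB ≤ 1) ∧
    weightedJaccardSVNR n p w tA iA fA tB iB fB = weightedJaccardSVNR n p w tB iB fB tA iA fA ∧
    ((∀ i j, tA i j = tB i j ∧ iA i j = iB i j ∧ fA i j = fB i j) →
      weightedJaccardSVNR n p w tA iA fA tB iB fB = 1) := by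
  have : Nonempty (Fin p) := Fin.pos_iff_nonempty.mp hp
  simp only [← neutrosophicTriple_eq_zero] at hnd
  simp only [weightedJaccardSVNR_eq_weightedJaccard, ← neutrosophicTriple_inj]
  exact stmt_3_general hw hw1 (fun i j => inner_neutrosophicTriple_nonneg (htA i j).1 (hiA i j).1
    (hfA i j).1 (htB i j).1 (hiB i j).1 (hfB i j).1) hnd
end

section
/- Let A and B be nondegenerate INR-sets of dimension p on X = {x_1, …, x_n}. Then the Jaccard similarity measure satisfies: (1) 0 ≤ (A,B)_J ≤ 1; (2) (A,B)_J = (B,A)_J; (3) if for every j and i the interval membership values of A and B coincide (t_A^{iL}(x_j) = t_B^{iL}(x_j), t_A^{iU}(x_j) = t_B^{iU}(x_j), i_A^{iL}(x_j) = i_B^{iL}(x_j), i_A^{iU}(x_j) = i_B^{iU}(x_j), f_A^{iL}(x_j) = f_B^{iL}(x_j), f_A^{iU}(x_j) = f_B^{iU}(x_j)), then (A,B)_J = 1. -/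
open Finset

noncomputable def jaccardINR (n p : ℕ)
    (tAL tAU iAL iAU fAL fAU tBL tBU iBL iBU fBL fBU : Fin p → Fin n → ℝ) : ℝ :=
  (1 / ((n : ℝ) * (p : ℝ))) * ∑ j : Fin n, ∑ i : Fin p,
    (tAL i j * tBL i j + tAU i j * tBU i j + iAL i j * iBL i j
        + iAU i j * iBU i j + fAL i j * fBL i j + fAU i j * fBU i j) /
      ((tAL i j ^ 2 + tAU i j ^ 2 + iAL i j ^ 2 + iAU i j ^ 2
        + fAL i j ^ 2 + fAU i j ^ 2)
      + (tBL i j ^ 2 + tBU i j ^ 2 + iBL i j ^ 2 + iBU i j ^ 2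
        + fBL i j ^ 2 + fBU i j ^ 2)
      - (tAL i j * tBL i j + tAU i j * tBU i j + iAL i j * iBL i j
        + iAU i j * iBU i j + fAL i j * fBL i j + fAU i j * fBU i j))

/-!
Reading the six interval end points as a vector of Euclidean space turns each summand of the
Jaccard measure into `⟪x, y⟫ / (‖x‖² + ‖y‖² - ⟪x, y⟫)`. The denominator exceeds the numerator by
`‖x - y‖²`, and membership degrees being nonnegative makes the numerator nonnegative, so each
summand lies in `[0, 1]`. For `x = y ≠ 0` it is `‖x‖² / ‖x‖² = 1`.
-/

open scoped BigOperators InnerProductSpace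

section Tanimoto

variable {E : Type*} [NormedAddCommGroup E] [InnerProductSpace ℝ E]

/-- The Tanimoto coefficient, the extension of the Jaccard index from sets to vectors of a real
inner product space. For a pair of zero vectors it takes the junk value `0 / 0 = 0`. -/
noncomputable def tanimoto (x y : E) : ℝ :=
  ⟪x, y⟫_ℝ / (‖x‖ ^ 2 + ‖y‖ ^ 2 - ⟪x, y⟫_ℝ)

lemma real_inner_le_norm_sq_add_norm_sq_sub_inner (x y : E) :
    ⟪x, y⟫_ℝ ≤ ‖x‖ ^ 2 + ‖y‖ ^ 2 - ⟪x, y⟫_ℝ := by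
  have h_expand := norm_sub_sq_real x y
  have h_nonneg : 0 ≤ ‖x - y‖ ^ 2 := sq_nonneg _
  linarith

lemma norm_sq_add_norm_sq_sub_inner_nonneg (x y : E) :
    0 ≤ ‖x‖ ^ 2 + ‖y‖ ^ 2 - ⟪x, y⟫_ℝ := by
  have h_inner := real_inner_le_norm_sq_add_norm_sq_sub_inner x y
  linarith [sq_nonneg ‖x‖, sq_nonneg ‖y‖]

lemma tanimoto_nonneg {x y : E} (hxy : 0 ≤ ⟪x, y⟫_ℝ) : 0 ≤ tanimoto x y :=
  div_nonneg hxy (norm_sq_add_norm_sq_sub_inner_nonneg x y)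

lemma tanimoto_le_one (x y : E) : tanimoto x y ≤ 1 :=
  div_le_one_of_le₀ (real_inner_le_norm_sq_add_norm_sq_sub_inner x y)
    (norm_sq_add_norm_sq_sub_inner_nonneg x y)

lemma tanimoto_comm (x y : E) : tanimoto x y = tanimoto y x := by
  rw [tanimoto, tanimoto, real_inner_comm, add_comm (‖x‖ ^ 2)]

lemma tanimoto_self {x : E} (hx : x ≠ 0) : tanimoto x x = 1 := by
  rw [tanimoto, real_inner_self_eq_norm_sq, add_sub_cancel_right]
  exact div_self (pow_ne_zero 2 (norm_ne_zero_iff.mpr hx))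

variable {κ : Type*} [Fintype κ]

/-- The Jaccard similarity of two finite families of vectors: the average of the Tanimoto
coefficients of corresponding members. -/
noncomputable def meanTanimoto (x y : κ → E) : ℝ :=
  𝔼 k, tanimoto (x k) (y k)

theorem stmt_6_general [Nonempty κ] (x y : κ → E) (hxy : ∀ k, 0 ≤ ⟪x k, y k⟫_ℝ)
    (hnd : ∀ k, ¬(x k = 0 ∧ y k = 0)) :
    (0 ≤ meanTanimoto x y ∧ meanTanimoto x y ≤ 1) ∧
      meanTanimoto x y = meanTanimoto y x ∧
      ((∀ k, x k = y k) → meanTanimoto x y = 1) := by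
  refine ⟨⟨?_, ?_⟩, ?_, fun h_eq => ?_⟩
  · exact expect_nonneg fun k _ => tanimoto_nonneg (hxy k)
  · exact expect_le univ_nonempty fun k _ => tanimoto_le_one (x k) (y k)
  · exact expect_congr rfl fun k _ => tanimoto_comm (x k) (y k)
  · have h_term (k : κ) : tanimoto (x k) (y k) = 1 := by
      have hx : x k ≠ 0 := fun h_zero => hnd k ⟨h_zero, h_eq k ▸ h_zero⟩
      rw [← h_eq k, tanimoto_self hx]
    simp only [meanTanimoto, h_term, Fintype.expect_const]

end Tanimoto

lemma real_inner_nonneg_of_coord_nonneg {ι : Type*} [Fintype ι] {x y : EuclideanSpace ℝ ι}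
    (hx : ∀ c, 0 ≤ x c) (hy : ∀ c, 0 ≤ y c) : 0 ≤ ⟪x, y⟫_ℝ := by
  rw [PiLp.inner_apply]
  exact sum_nonneg fun c _ => mul_nonneg (hy c) (hx c)

section Membership

variable {n p : ℕ}

/-- The 6-tuple of interval end points which an INR-set assigns to the element `k.1` in the
component `k.2`. It is a vector of Euclidean space, so that the quantities `N` and `S` of the
Jaccard measure are inner products and squared norms. -/
def membershipVector (tL tU iL iU fL fU : Fin p → Fin n → ℝ) (k : Fin n × Fin p) :
    EuclideanSpace ℝ (Fin 6) :=
  !₂[tL k.2 k.1, tU k.2 k.1, iL k.2 k.1, iU k.2 k.1, fL k.2 k.1, fU k.2 k.1]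

variable {tL tU iL iU fL fU tL' tU' iL' iU' fL' fU' : Fin p → Fin n → ℝ}

lemma forall_membershipVector_iff {P : ℝ → Prop} {k : Fin n × Fin p} :
    (∀ c, P (membershipVector tL tU iL iU fL fU k c)) ↔
      P (tL k.2 k.1) ∧ P (tU k.2 k.1) ∧ P (iL k.2 k.1) ∧
        P (iU k.2 k.1) ∧ P (fL k.2 k.1) ∧ P (fU k.2 k.1) := by
  simp [membershipVector, Fin.forall_fin_succ]

lemma membershipVector_eq_zero_iff {k : Fin n × Fin p} :
    membershipVector tL tU iL iU fL fU k = 0 ↔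
      tL k.2 k.1 = 0 ∧ tU k.2 k.1 = 0 ∧ iL k.2 k.1 = 0 ∧
        iU k.2 k.1 = 0 ∧ fL k.2 k.1 = 0 ∧ fU k.2 k.1 = 0 := by
  simp [membershipVector]

lemma membershipVector_eq_iff {k : Fin n × Fin p} :
    membershipVector tL tU iL iU fL fU k = membershipVector tL' tU' iL' iU' fL' fU' k ↔
      tL k.2 k.1 = tL' k.2 k.1 ∧ tU k.2 k.1 = tU' k.2 k.1 ∧ iL k.2 k.1 = iL' k.2 k.1 ∧
        iU k.2 k.1 = iU' k.2 k.1 ∧ fL k.2 k.1 = fL' k.2 k.1 ∧ fU k.2 k.1 = fU' k.2 k.1 := by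
  simp [membershipVector]

variable (tL tU iL iU fL fU tL' tU' iL' iU' fL' fU')

lemma inner_membershipVector (k : Fin n × Fin p) :
    ⟪membershipVector tL tU iL iU fL fU k, membershipVector tL' tU' iL' iU' fL' fU' k⟫_ℝ =
      tL k.2 k.1 * tL' k.2 k.1 + tU k.2 k.1 * tU' k.2 k.1 + iL k.2 k.1 * iL' k.2 k.1
        + iU k.2 k.1 * iU' k.2 k.1 + fL k.2 k.1 * fL' k.2 k.1 + fU k.2 k.1 * fU' k.2 k.1 := by
  simp only [membershipVector, PiLp.inner_apply, Fin.sum_univ_six]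
  simp [mul_comm]

lemma norm_sq_membershipVector (k : Fin n × Fin p) :
    ‖membershipVector tL tU iL iU fL fU k‖ ^ 2 =
      tL k.2 k.1 ^ 2 + tU k.2 k.1 ^ 2 + iL k.2 k.1 ^ 2
        + iU k.2 k.1 ^ 2 + fL k.2 k.1 ^ 2 + fU k.2 k.1 ^ 2 := by
  rw [← real_inner_self_eq_norm_sq, inner_membershipVector]
  simp only [sq]

lemma jaccardINR_eq_meanTanimoto :
    jaccardINR n p tL tU iL iU fL fU tL' tU' iL' iU' fL' fU' =
      meanTanimoto (membershipVector tL tU iL iU fL fU)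
        (membershipVector tL' tU' iL' iU' fL' fU') := by
  simp only [jaccardINR, meanTanimoto, tanimoto, Fintype.expect_eq_sum_div_card,
    Fintype.sum_prod_type, Fintype.card_prod, Fintype.card_fin, Nat.cast_mul,
    inner_membershipVector, norm_sq_membershipVector, one_div_mul_eq_div]

end Membership

theorem stmt_6
    (n p : ℕ) (hn : 1 ≤ n) (hp : 1 ≤ p)
    (tAL tAU iAL iAU fAL fAU tBL tBU iBL iBU fBL fBU : Fin p → Fin n → ℝ)
    (hAord : ∀ i j, tAL i j ≤ tAU i j ∧ iAL i j ≤ iAU i j ∧ fAL i j ≤ fAU i j)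
    (hBord : ∀ i j, tBL i j ≤ tBU i j ∧ iBL i j ≤ iBU i j ∧ fBL i j ≤ fBU i j)
    (hA : ∀ i j, tAL i j ∈ Set.Icc (0 : ℝ) 1 ∧ tAU i j ∈ Set.Icc (0 : ℝ) 1 ∧
      iAL i j ∈ Set.Icc (0 : ℝ) 1 ∧ iAU i j ∈ Set.Icc (0 : ℝ) 1 ∧
      fAL i j ∈ Set.Icc (0 : ℝ) 1 ∧ fAU i j ∈ Set.Icc (0 : ℝ) 1)
    (hB : ∀ i j, tBL i j ∈ Set.Icc (0 : ℝ) 1 ∧ tBU i j ∈ Set.Icc (0 : ℝ) 1 ∧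
      iBL i j ∈ Set.Icc (0 : ℝ) 1 ∧ iBU i j ∈ Set.Icc (0 : ℝ) 1 ∧
      fBL i j ∈ Set.Icc (0 : ℝ) 1 ∧ fBU i j ∈ Set.Icc (0 : ℝ) 1)
    (hnd : ∀ i j, ¬((tAL i j = 0 ∧ tAU i j = 0 ∧ iAL i j = 0 ∧ iAU i j = 0 ∧
                       fAL i j = 0 ∧ fAU i j = 0) ∧
                     (tBL i j = 0 ∧ tBU i j = 0 ∧ iBL i j = 0 ∧ iBU i j = 0 ∧
                       fBL i j = 0 ∧ fBU i j = 0))) :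
    (0 ≤ jaccardINR n p tAL tAU iAL iAU fAL fAU tBL tBU iBL iBU fBL fBU ∧
      jaccardINR n p tAL tAU iAL iAU fAL fAU tBL tBU iBL iBU fBL fBU ≤ 1) ∧
    jaccardINR n p tAL tAU iAL iAU fAL fAU tBL tBU iBL iBU fBL fBU =
      jaccardINR n p tBL tBU iBL iBU fBL fBU tAL tAU iAL iAU fAL fAU ∧
    ((∀ i j, tAL i j = tBL i j ∧ tAU i j = tBU i j ∧ iAL i j = iBL i j ∧
        iAU i j = iBU i j ∧ fAL i j = fBL i j ∧ fAU i j = fBU i j) →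
      jaccardINR n p tAL tAU iAL iAU fAL fAU tBL tBU iBL iBU fBL fBU = 1) := by
  have : Nonempty (Fin n × Fin p) := ⟨⟨0, hn⟩, ⟨0, hp⟩⟩
  let a := membershipVector tAL tAU iAL iAU fAL fAU
  let b := membershipVector tBL tBU iBL iBU fBL fBU
  have hA_mem (k : Fin n × Fin p) : ∀ c, a k c ∈ Set.Icc 0 1 :=
    forall_membershipVector_iff.mpr (hA k.2 k.1)
  have hB_mem (k : Fin n × Fin p) : ∀ c, b k c ∈ Set.Icc 0 1 :=
    forall_membershipVector_iff.mpr (hB k.2 k.1)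
  have h_inner (k : Fin n × Fin p) : 0 ≤ ⟪a k, b k⟫_ℝ :=
    real_inner_nonneg_of_coord_nonneg (fun c => (hA_mem k c).1) (fun c => (hB_mem k c).1)
  have h_nondegenerate (k : Fin n × Fin p) : ¬(a k = 0 ∧ b k = 0) := by
    simpa only [a, b, membershipVector_eq_zero_iff] using hnd k.2 k.1
  obtain ⟨h_bounds, h_comm, h_one⟩ := stmt_6_general a b h_inner h_nondegenerate
  simp only [jaccardINR_eq_meanTanimoto]
  exact ⟨h_bounds, h_comm, fun h_eq =>
    h_one fun k => membershipVector_eq_iff.mpr (h_eq k.2 k.1)⟩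
end
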